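/- Let A be a one-register alternating finite-memory automaton over an infinite alphabet Σ with state set S and distinguished letters Δ. Let σ = σ1σ2⋯σm ∈ L(A), let C = C_0, C_1, …, C_m be an accepting run of A on σ, and suppose there are i < j ≤ m such that S_{σ,C,i} = S_{σ,C,j} and f_{σ,C,i}(Q) ≤ f_{σ,C,j}(Q) for every nonempty Q ⊆ S. Then there exists a Δ-permutation α of Σ such that, setting τ = σ1⋯σ_{m−j}, υ = σ_{m−j+1}⋯σ_{m−i}, and φ = σ_{m−i+1}⋯σ_m, for every k ≥ 1 the word τ υ α(υ) α²(υ) ⋯ α^k(υ) α^k(φ) belongs to L(A). -/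

import Mathlib

/-- A one-register alternating finite-memory automaton over the alphabet `Sigma`,
with states `S`. -/
structure AFMA (Sigma : Type) (S : Type) where
  s0 : S
  F : Set S
  Δ : Finset Sigma
  θ0 : Sigma
  θ0_notin : θ0 ∉ Δ
  μΔ : S → Sigma → Set (Set S)
  μeq : S → Set (Set S)
  μne : S → Set (Set S × Set S)

namespace AFMA

variable {Sigma S : Type}

open Classical

/-- The induced transition function `μ^c` on a configuration `c` and a letter `σ`:
a set of sets of configurations. -/
noncomputable def muC (A : AFMA Sigma S) (c : S × Sigma) (σ : Sigma) : Set (Set (S × Sigma)) :=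
  if σ ∈ A.Δ then {D | ∃ Q ∈ A.μΔ c.1 σ, D = Q ×ˢ ({c.2} : Set Sigma)}
  else if σ = c.2 then {D | ∃ Q ∈ A.μeq c.1, D = Q ×ˢ ({c.2} : Set Sigma)}
  else {D | ∃ p ∈ A.μne c.1, D = p.1 ×ˢ ({c.2} : Set Sigma) ∪ p.2 ×ˢ ({σ} : Set Sigma)}

/-- `SetStep A C σ C'` : `C' ∈ μ^c(C, σ)`, i.e. `C'` is a union, over all `c ∈ C`,
of chosen elements of `μ^c(c, σ)`. -/
def SetStep (A : AFMA Sigma S) (C : Set (S × Sigma)) (σ : Sigma)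
    (C' : Set (S × Sigma)) : Prop :=
  ∃ g : S × Sigma → Set (S × Sigma),
    (∀ c ∈ C, g c ∈ A.muC c σ) ∧ C' = ⋃ c ∈ C, g c

/-- `Steps A C w C'` : reading the word `w` from the configuration set `C`
the automaton can reach the configuration set `C'`. -/
inductive Steps (A : AFMA Sigma S) :
    Set (S × Sigma) → List Sigma → Set (S × Sigma) → Prop
  | nil (C) : Steps A C [] C
  | cons {C C' C'' σ w} : A.SetStep C σ C' → Steps A C' w C'' → Steps A C (σ :: w) C''

/-- A set of configurations is accepting if all its states are accepting. -/
def Accepting (A : AFMA Sigma S) (C : Set (S × Sigma)) : Prop :=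
  ∀ c ∈ C, c.1 ∈ A.F

/-- The language accepted by `A`. -/
def Lang (A : AFMA Sigma S) : Set (List Sigma) :=
  {w | ∃ C, A.Steps {(A.s0, A.θ0)} w C ∧ A.Accepting C}

/-- The action of a permutation of the alphabet on a set of configurations. -/
def mapConfigs (α : Equiv.Perm Sigma) (C : Set (S × Sigma)) : Set (S × Sigma) :=
  (fun c => (c.1, α c.2)) '' C

end AFMA

/-- A `Δ`-permutation of the alphabet: a bijection fixing every distinguished letter. -/
def IsDeltaPerm {Sigma : Type} (Δ : Finset Sigma) (α : Equiv.Perm Sigma) : Prop :=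
  ∀ δ ∈ Δ, α δ = δ

namespace AFMA

variable {Sigma S : Type}

/-- `Σ(C)` : the set of (non-distinguished) letters occurring in configurations of `C`. -/
def lettersOf (Δ : Finset Sigma) (C : Set (S × Sigma)) : Set Sigma :=
  {σ | σ ∉ Δ ∧ ∃ s, (s, σ) ∈ C}

/-- `S^σ(C)` : the states paired with the letter `σ` in `C`. -/
def statesAt (C : Set (S × Sigma)) (σ : Sigma) : Set S :=
  {s | (s, σ) ∈ C}

/-- `S^{Γ}(C)` : the states paired with some letter of `Γ` in `C`. -/
def statesOn (C : Set (S × Sigma)) (Γ : Set Sigma) : Set S :=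
  ⋃ σ ∈ Γ, statesAt C σ

/-- `Σ^Q(C)` : the letters `σ` with `S^σ(C) = Q`. -/
def lettersWith (C : Set (S × Sigma)) (Q : Set S) : Set Sigma :=
  {σ | statesAt C σ = Q}

/-- The relation `C1,Γ1 ⪯_α C2,Γ2`. -/
def Preceq (Δ : Finset Sigma) (α : Equiv.Perm Sigma)
    (C1 : Set (S × Sigma)) (Γ1 : Set Sigma)
    (C2 : Set (S × Sigma)) (Γ2 : Set Sigma) : Prop :=
  Γ1 ⊆ ⇑α '' Γ2 ∧
  (⇑α '' Γ2) ∩ lettersOf Δ C1 ⊆ Γ1 ∧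
  (∀ σ ∈ Γ1, statesAt C1 σ ⊆ statesAt C2 (α⁻¹ σ)) ∧
  statesOn C1 Γ1ᶜ ⊆ statesOn C2 Γ2ᶜ

end AFMA

/-- The `k`-fold pumping `τ υ α(υ) α²(υ) ⋯ α^k(υ) α^k(φ)` of the decomposition
`τ ++ υ ++ φ` by the permutation `α`. -/
def pumpedWord {Sigma : Type} (α : Equiv.Perm Sigma) (τ υ φ : List Sigma) (k : ℕ) :
    List Sigma :=
  τ ++ υ ++ ((List.range k).flatMap fun i => υ.map ⇑(α ^ (i + 1))) ++ φ.map ⇑(α ^ k)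

namespace AFMA

theorem aux_perm {Sigma : Type} [Infinite Sigma] (T M : Finset Sigma) (f : Sigma → Sigma)
    (hMT : M ⊆ T) (hf : ∀ x ∈ M, f x ∈ T) (hinj : Set.InjOn f M) :
    ∃ α : Equiv.Perm Sigma, (∀ m ∈ M, α (f m) = m) ∧
      ∀ x ∈ T, α x ∈ M ∨ ∀ n : ℕ, 1 ≤ n → (α ^ n) x ∉ T := by
  classical
  obtain ⟨g, hg⟩ := Finset.exists_equiv_extend_of_card_eq (α := T) (β := Sigma) (t := T)
    (by simp) (s := Finset.univ.filter (fun x : T => (x : Sigma) ∈ M)) (f := fun x => f x)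
    (by
      intro y hy
      simp only [Finset.mem_image, Finset.mem_filter, Finset.mem_univ, true_and] at hy
      obtain ⟨a, ha, rfl⟩ := hy
      exact hf _ ha)
    (by
      intro a ha b hb hab
      simp only [Finset.coe_filter, Finset.mem_univ, true_and, Set.mem_ofPred_eq] at ha hb
      exact Subtype.ext (hinj ha hb hab))
  let β : Equiv.Perm Sigma := Equiv.Perm.ofSubtype (p := fun x => x ∈ T) g.symm
  have hβT : ∀ x (hx : x ∈ T), β x = (g.symm ⟨x, hx⟩ : T) := fun x hx =>
    Equiv.Perm.ofSubtype_apply_of_mem _ hx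
  have hβn : ∀ x, x ∉ T → β x = x := fun x hx =>
    Equiv.Perm.ofSubtype_apply_of_not_mem _ hx
  have hβf : ∀ m ∈ M, β (f m) = m := by
    intro m hm
    rw [hβT _ (hf m hm)]
    have h1 := hg ⟨m, hMT hm⟩ (by simpa using hm)
    have h2 : (⟨f m, hf m hm⟩ : T) = g ⟨m, hMT hm⟩ := Subtype.ext h1.symm
    rw [h2]; simp
  -- chains
  have hinf : Infinite {x : Sigma // x ∉ T} := by
    have := (Finset.finite_toSet T).infinite_compl
    exact this.to_subtype
  obtain ⟨e, he⟩ : ∃ e : T × ℤ → {x : Sigma // x ∉ T}, Function.Injective e := by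
    obtain ⟨u, hu⟩ := exists_injective_nat (T × ℤ)
    exact ⟨fun p => Infinite.natEmbedding _ (u p),
      (Infinite.natEmbedding _).injective.comp hu⟩
  let c : {x : T // (x : Sigma) ∉ M} × ℤ → Sigma := fun p =>
    if p.2 = 0 then (p.1 : T) else (e (p.1, p.2) : Sigma)
  have hc : Function.Injective c := by
    rintro ⟨a, n⟩ ⟨b, m⟩ h
    simp only [c] at h
    split_ifs at h with h1 h2 h2
    · simp only [Prod.mk.injEq]
      exact ⟨Subtype.ext (Subtype.ext h), by omega⟩
    · exact absurd (h ▸ a.1.2) (e (b.1, m)).2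
    · exact absurd (h.symm ▸ b.1.2) (e (a.1, n)).2
    · have := he (Subtype.ext h)
      simp only [Prod.mk.injEq] at this ⊢
      exact ⟨Subtype.ext this.1, this.2⟩
  have hcT : ∀ p, p.2 ≠ 0 → c p ∉ T := by
    intro p hp
    simp only [c, hp, if_false]
    exact (e _).2
  let sh : Equiv.Perm ({x : T // (x : Sigma) ∉ M} × ℤ) :=
    Equiv.prodCongr (Equiv.refl _) (Equiv.addRight 1)
  let s : Equiv.Perm Sigma := sh.extendDomain (Equiv.ofInjective c hc)
  have hs : ∀ p, s (c p) = c (p.1, p.2 + 1) := by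
    intro p
    have := Equiv.Perm.extendDomain_apply_image sh (Equiv.ofInjective c hc) p
    rw [Equiv.ofInjective_apply, Equiv.ofInjective_apply] at this
    exact this
  have hsM : ∀ m ∈ M, s m = m := by
    intro m hm
    apply Equiv.Perm.extendDomain_apply_not_subtype
    rintro ⟨p, hp⟩
    by_cases h : p.2 = 0
    · simp only [c, h, if_true] at hp
      exact p.1.2 (hp ▸ hm)
    · exact hcT p h (hp ▸ hMT hm)
  refine ⟨s * β, ?_, ?_⟩
  · intro m hm
    rw [Equiv.Perm.mul_apply, hβf m hm, hsM m hm]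
  · intro x hx
    by_cases hy : ((g.symm ⟨x, hx⟩ : T) : Sigma) ∈ M
    · left
      rw [Equiv.Perm.mul_apply, hβT x hx, hsM _ hy]; exact hy
    · right
      have key : ∀ n : ℕ, ((s * β) ^ (n + 1)) x = c (⟨g.symm ⟨x, hx⟩, hy⟩, (n : ℤ) + 1) := by
        intro n
        induction n with
        | zero =>
          have := hs (⟨g.symm ⟨x, hx⟩, hy⟩, 0)
          rw [zero_add, pow_one, Equiv.Perm.mul_apply, hβT x hx]
          simpa [c] using this
        | succ n ih =>
          rw [pow_succ', Equiv.Perm.mul_apply, ih, Equiv.Perm.mul_apply,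
            hβn _ (hcT _ (by simp; omega)), hs]
          simp
      intro n hn
      obtain ⟨n, rfl⟩ : ∃ k, n = k + 1 := ⟨n - 1, by omega⟩
      rw [key]
      exact hcT _ (by simp; omega)

variable {Sigma S : Type}

theorem Steps.append {A : AFMA Sigma S} {C C' C'' u v} (h : A.Steps C u C')
    (h' : A.Steps C' v C'') : A.Steps C (u ++ v) C'' := by
  induction h with
  | nil => exact h'
  | cons hs _ ih => exact Steps.cons hs (ih h')

theorem Steps.letters {A : AFMA Sigma S} {C C' w} (h : A.Steps C w C') (P : Sigma → Prop)
    (hC : ∀ c ∈ C, P c.2) (hw : ∀ x ∈ w, x ∉ A.Δ → P x) : ∀ c ∈ C', P c.2 := by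
  induction h with
  | nil => exact hC
  | @cons C C' C'' σ w hs _ ih =>
    apply ih
    · obtain ⟨g, hg, rfl⟩ := hs
      intro c hc
      simp only [Set.mem_iUnion] at hc
      obtain ⟨d, hd, hc⟩ := hc
      have h1 := hg d hd
      have hPd := hC d hd
      have hPσ := hw σ (by simp)
      unfold muC at h1
      split_ifs at h1 with h2 h3
      · obtain ⟨Q, _, h⟩ := h1
        rw [h] at hc
        obtain ⟨_, hc⟩ := hc
        rw [Set.mem_singleton_iff] at hc
        rwa [hc]
      · obtain ⟨Q, _, h⟩ := h1
        rw [h] at hc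
        obtain ⟨_, hc⟩ := hc
        rw [Set.mem_singleton_iff] at hc
        rwa [hc]
      · obtain ⟨Q, _, h⟩ := h1
        rw [h] at hc
        rcases hc with ⟨_, hc⟩ | ⟨_, hc⟩
        · rw [Set.mem_singleton_iff] at hc
          rwa [hc]
        · rw [Set.mem_singleton_iff] at hc
          rw [hc]; exact hPσ h2
    · intro x hx
      exact hw x (List.mem_cons_of_mem _ hx)

/-- simulation of `C` by `D` along `α` for words over `Γ`. -/
def Sim (α : Equiv.Perm Sigma) (Γ : Set Sigma) (D C : Set (S × Sigma)) : Prop :=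
  ∀ c ∈ D, (∃ x ∈ Γ, α x = c.2 ∧ (c.1, x) ∈ C) ∨
    ((∀ x ∈ Γ, α x ≠ c.2) ∧ ∃ x, x ∉ Γ ∧ (c.1, x) ∈ C)

theorem Sim.step {A : AFMA Sigma S} {α : Equiv.Perm Sigma} (hα : IsDeltaPerm A.Δ α)
    {Γ : Set Sigma} {D C C' : Set (S × Sigma)} (h : Sim α Γ D C) {σ : Sigma} (hσ : σ ∈ Γ)
    (hs : A.SetStep C σ C') : ∃ D', A.SetStep D (α σ) D' ∧ Sim α Γ D' C' := by
  obtain ⟨g, hg, rfl⟩ := hs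
  have hΔ : α σ ∈ A.Δ → α σ = σ := fun h => α.injective (hα _ h)
  have key : ∀ c : S × Sigma, ∃ E, c ∈ D → (E ∈ A.muC c (α σ) ∧ Sim α Γ E (⋃ c ∈ C, g c)) := by
    intro c
    by_cases hc : c ∈ D
    swap
    · exact ⟨∅, fun h => absurd h hc⟩
    -- a common reformulation
    have hrep : ∃ x, (c.1, x) ∈ C ∧ (σ = x ↔ α σ = c.2) ∧
        ((x ∈ Γ ∧ α x = c.2) ∨ ((∀ x ∈ Γ, α x ≠ c.2) ∧ x ∉ Γ)) := by
      rcases h c hc with ⟨x, hx, hxc, hxC⟩ | ⟨h1, x, hx, hxC⟩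
      · refine ⟨x, hxC, ?_, Or.inl ⟨hx, hxc⟩⟩
        rw [← hxc]; simp
      · refine ⟨x, hxC, ?_, Or.inr ⟨h1, hx⟩⟩
        constructor
        · rintro rfl; exact absurd hσ hx
        · intro h2; exact absurd h2 (h1 _ hσ)
    obtain ⟨x, hxC, hiff, hx⟩ := hrep
    have hsub : ∀ d ∈ g (c.1, x), d ∈ ⋃ c ∈ C, g c := by
      intro d hd
      simp only [Set.mem_iUnion]
      exact ⟨_, hxC, hd⟩
    have hold : ∀ s, (s, x) ∈ g (c.1, x) → (∃ y ∈ Γ, α y = c.2 ∧ (s, y) ∈ ⋃ c ∈ C, g c) ∨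
        ((∀ y ∈ Γ, α y ≠ c.2) ∧ ∃ y, y ∉ Γ ∧ (s, y) ∈ ⋃ c ∈ C, g c) := by
      intro s hs
      rcases hx with ⟨h1, h2⟩ | ⟨h1, h2⟩
      · exact Or.inl ⟨x, h1, h2, hsub _ hs⟩
      · exact Or.inr ⟨h1, x, h2, hsub _ hs⟩
    have h1 := hg _ hxC
    unfold muC at h1
    split_ifs at h1 with h2 h3
    · obtain ⟨Q, hQ, h⟩ := h1
      refine ⟨Q ×ˢ {c.2}, fun _ => ⟨?_, ?_⟩⟩
      · unfold muC
        rw [hα _ h2, if_pos h2]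
        exact ⟨Q, hQ, rfl⟩
      · rintro ⟨s, y⟩ ⟨hs, hy⟩
        obtain rfl : y = c.2 := hy
        exact hold s (by rw [h]; exact ⟨hs, rfl⟩)
    · obtain ⟨Q, hQ, h⟩ := h1
      refine ⟨Q ×ˢ {c.2}, fun _ => ⟨?_, ?_⟩⟩
      · unfold muC
        rw [if_neg (fun h4 => h2 (hΔ h4 ▸ h4)), if_pos (hiff.1 h3)]
        exact ⟨Q, hQ, rfl⟩
      · rintro ⟨s, y⟩ ⟨hs, hy⟩
        obtain rfl : y = c.2 := hy
        exact hold s (by rw [h]; exact ⟨hs, rfl⟩)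
    · obtain ⟨p, hp, h⟩ := h1
      refine ⟨p.1 ×ˢ {c.2} ∪ p.2 ×ˢ {α σ}, fun _ => ⟨?_, ?_⟩⟩
      · unfold muC
        rw [if_neg (fun h4 => h2 (hΔ h4 ▸ h4)), if_neg (fun h4 => h3 (hiff.2 h4))]
        exact ⟨p, hp, rfl⟩
      · rintro ⟨s, y⟩ (⟨hs, hy⟩ | ⟨hs, hy⟩)
        · obtain rfl : y = c.2 := hy
          exact hold s (by rw [h]; exact Or.inl ⟨hs, rfl⟩)
        · obtain rfl : y = α σ := hy
          exact Or.inl ⟨σ, hσ, rfl, hsub _ (by rw [h]; exact Or.inr ⟨hs, rfl⟩)⟩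
  choose E hE using key
  refine ⟨⋃ c ∈ D, E c, ⟨E, fun c hc => (hE c hc).1, rfl⟩, ?_⟩
  intro d hd
  simp only [Set.mem_iUnion] at hd
  obtain ⟨c, hc, hd⟩ := hd
  exact (hE c hc).2 d hd

theorem Sim.steps {A : AFMA Sigma S} {α : Equiv.Perm Sigma} (hα : IsDeltaPerm A.Δ α)
    {Γ : Set Sigma} {C C' : Set (S × Sigma)} {u : List Sigma}
    (hs : A.Steps C u C') : ∀ D, Sim α Γ D C → (∀ x ∈ u, x ∈ Γ) →
    ∃ D', A.Steps D (u.map α) D' ∧ Sim α Γ D' C' := by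
  induction hs with
  | nil C => exact fun D h _ => ⟨D, Steps.nil _, h⟩
  | cons hs _ ih =>
    intro D h hu
    obtain ⟨D1, h1, h2⟩ := h.step hα (hu _ (by simp)) hs
    obtain ⟨D2, h3, h4⟩ := ih D1 h2 (fun x hx => hu x (List.mem_cons_of_mem _ hx))
    exact ⟨D2, Steps.cons h1 h3, h4⟩

theorem steps_of_run {A : AFMA Sigma S} (w : List Sigma) (Cs : ℕ → Set (S × Sigma))
    (hstep : ∀ l (h : l < w.length), A.SetStep (Cs l) (w.get ⟨l, h⟩) (Cs (l + 1))) :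
    ∀ n a, a + n ≤ w.length → A.Steps (Cs a) ((w.drop a).take n) (Cs (a + n)) := by
  intro n
  induction n with
  | zero => intro a _; simpa using Steps.nil _
  | succ n ih =>
    intro a ha
    have h := hstep a (by omega)
    rw [List.drop_eq_getElem_cons (by omega : a < w.length), List.take_succ_cons]
    have h2 := ih (a + 1) (by omega)
    rw [show a + 1 + n = a + (n + 1) by omega] at h2
    exact Steps.cons h h2

theorem IsDeltaPerm.pow {Δ : Finset Sigma} {α : Equiv.Perm Sigma} (h : IsDeltaPerm Δ α)
    (n : ℕ) : IsDeltaPerm Δ (α ^ n) := by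
  intro δ hδ
  induction n with
  | zero => rfl
  | succ n ih => rw [pow_succ', Equiv.Perm.mul_apply, ih, h δ hδ]

theorem pump_core [Infinite Sigma] (A : AFMA Sigma S) (Cj Ci Cm : Set (S × Sigma))
    (υ φ : List Sigma) (hυ : A.Steps Cj υ Ci) (hφ : A.Steps Ci φ Cm) (hacc : A.Accepting Cm)
    (T0 : Finset Sigma) (hTi : ∀ c ∈ Ci, c.2 ∈ T0)
    (hΔi : ∀ c ∈ Ci, c.2 ∉ A.Δ) (hΔj : ∀ c ∈ Cj, c.2 ∉ A.Δ)
    (Γi Γj : Set Sigma) (hΓi : Γi = {x | x ∈ φ}) (hΓj : Γj = {x | x ∈ υ ++ φ})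
    (hS : statesOn Ci Γiᶜ = statesOn Cj Γjᶜ)
    (hf : ∀ Q : Set S, Q.Nonempty →
      (lettersWith Ci Q ∩ Γi).ncard ≤ (lettersWith Cj Q ∩ Γj).ncard) :
    ∃ α : Equiv.Perm Sigma, IsDeltaPerm A.Δ α ∧ ∀ k : ℕ, ∃ C,
      A.Steps Ci (((List.range k).flatMap fun i => υ.map ⇑(α ^ (i + 1))) ++ φ.map ⇑(α ^ k)) C ∧
        A.Accepting C := by
  classical
  have hfin_i : Γi.Finite := by rw [hΓi]; exact List.finite_toSet φ
  have hfin_j : Γj.Finite := by rw [hΓj]; exact List.finite_toSet _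
  have hΓij : Γi ⊆ Γj := by
    rw [hΓi, hΓj]; intro x hx; exact List.mem_append_right _ hx
  have hex : ∀ Q : Set S, ∃ f : Sigma → Sigma, Q.Nonempty →
      (lettersWith Ci Q ∩ Γi ⊆ f ⁻¹' (lettersWith Cj Q ∩ Γj) ∧
        Set.InjOn f (lettersWith Ci Q ∩ Γi)) := by
    intro Q
    by_cases hQ : Q.Nonempty
    swap
    · exact ⟨id, fun h => absurd h hQ⟩
    have h1 := hf Q hQ
    have f1 : (lettersWith Ci Q ∩ Γi).Finite := hfin_i.subset Set.inter_subset_right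
    have f2 : (lettersWith Cj Q ∩ Γj).Finite := hfin_j.subset Set.inter_subset_right
    have h2 : (lettersWith Ci Q ∩ Γi).encard ≤ (lettersWith Cj Q ∩ Γj).encard := by
      rw [← f1.cast_ncard_eq, ← f2.cast_ncard_eq]; exact_mod_cast h1
    obtain ⟨f, h3, h4⟩ := f1.exists_injOn_of_encard_le h2
    exact ⟨f, fun _ => ⟨h3, h4⟩⟩
  choose F hF using hex
  -- the relevant letters
  let M0 : Finset Sigma := hfin_i.toFinset.filter (fun x => (statesAt Ci x).Nonempty)
  have hM0 : ∀ x, x ∈ M0 ↔ x ∈ Γi ∧ (statesAt Ci x).Nonempty := by intro x; simp [M0]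
  have hM0Δ : ∀ x ∈ M0, x ∉ A.Δ := by
    intro x hx
    obtain ⟨s, hs⟩ := ((hM0 x).1 hx).2
    exact hΔi (s, x) hs
  let ι : Sigma → Sigma := fun x => if x ∈ A.Δ then x else F (statesAt Ci x) x
  have hιΔ : ∀ x ∈ A.Δ, ι x = x := fun x hx => by simp [ι, hx]
  have hιM : ∀ x ∈ M0, ι x = F (statesAt Ci x) x := fun x hx => by simp [ι, hM0Δ x hx]
  have hιj : ∀ x ∈ M0, statesAt Cj (ι x) = statesAt Ci x ∧ ι x ∈ Γj := by
    intro x hx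
    rw [hιM x hx]
    exact (hF _ ((hM0 x).1 hx).2).1 ⟨rfl, ((hM0 x).1 hx).1⟩
  have hιnΔ : ∀ x ∈ M0, ι x ∉ A.Δ := by
    intro x hx
    obtain ⟨s, hs⟩ := ((hM0 x).1 hx).2
    rw [← (hιj x hx).1] at hs
    exact hΔj (s, ι x) hs
  let T : Finset Sigma := T0 ∪ hfin_j.toFinset ∪ A.Δ
  have hT0 : ∀ x ∈ T0, x ∈ T := fun x hx => by simp [T, hx]
  have hTj : ∀ x ∈ Γj, x ∈ T := fun x hx => by simp [T, hx]
  have hTΔ : ∀ x ∈ A.Δ, x ∈ T := fun x hx => by simp [T, hx]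
  obtain ⟨α, hα1, hα2⟩ := aux_perm T (M0 ∪ A.Δ) ι
    (by
      intro x hx
      rcases Finset.mem_union.1 hx with hx | hx
      · exact hTj _ (hΓij ((hM0 x).1 hx).1)
      · exact hTΔ x hx)
    (by
      intro x hx
      rcases Finset.mem_union.1 hx with hx | hx
      · exact hTj _ (hιj x hx).2
      · rw [hιΔ x hx]; exact hTΔ x hx)
    (by
      intro x hx y hy hxy
      rcases Finset.mem_union.1 hx with hx | hx <;> rcases Finset.mem_union.1 hy with hy | hy
      · have hst : statesAt Ci x = statesAt Ci y := by
          rw [← (hιj x hx).1, ← (hιj y hy).1, hxy]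
        rw [hιM x hx, hιM y hy, ← hst] at hxy
        exact (hF _ ((hM0 x).1 hx).2).2 ⟨rfl, ((hM0 x).1 hx).1⟩
          ⟨hst.symm, ((hM0 y).1 hy).1⟩ hxy
      · rw [hιΔ y hy] at hxy
        exact absurd (hxy ▸ hy) (hιnΔ x hx)
      · rw [hιΔ x hx] at hxy
        exact absurd (hxy ▸ hx) (hιnΔ y hy)
      · rwa [hιΔ x hx, hιΔ y hy] at hxy)
  have hαΔ : IsDeltaPerm A.Δ α := by
    intro δ hδ
    have := hα1 δ (Finset.mem_union_right _ hδ)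
    rwa [hιΔ δ hδ] at this
  refine ⟨α, hαΔ, ?_⟩
  -- `α Γj` meets the letters of `Ci` only inside `Γi`
  have hmeet : ∀ x ∈ Γj, ∀ c ∈ Ci, α x = c.2 → c.2 ∈ Γi := by
    intro x hx c hc hxc
    rcases hα2 x (hTj x hx) with h | h
    · rcases Finset.mem_union.1 h with h | h
      · rw [← hxc]; exact ((hM0 _).1 h).1
      · exact absurd (hxc ▸ h) (hΔi c hc)
    · have := h 1 le_rfl
      rw [pow_one, hxc] at this
      exact absurd (hT0 _ (hTi c hc)) this
  have hout : ∀ c ∈ Ci, c.2 ∉ Γi → ∃ x, x ∉ Γj ∧ (c.1, x) ∈ Cj := by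
    intro c hc hci
    have h1 : c.1 ∈ statesOn Ci Γiᶜ := by
      simp only [statesOn, Set.mem_iUnion]
      exact ⟨c.2, hci, hc⟩
    rw [hS] at h1
    simp only [statesOn, Set.mem_iUnion] at h1
    obtain ⟨x, hx, h⟩ := h1
    exact ⟨x, hx, h⟩
  have hbase : Sim α Γj Ci Cj := by
    intro c hc
    by_cases hci : c.2 ∈ Γi
    · left
      have hm : c.2 ∈ M0 := (hM0 _).2 ⟨hci, c.1, hc⟩
      refine ⟨ι c.2, (hιj _ hm).2, hα1 _ (Finset.mem_union_left _ hm), ?_⟩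
      have : c.1 ∈ statesAt Cj (ι c.2) := by rw [(hιj _ hm).1]; exact hc
      exact this
    · right
      exact ⟨fun x hx h => hci (hmeet x hx c hc h), hout c hc hci⟩
  -- the main induction
  have main : ∀ k : ℕ, ∃ D,
      A.Steps Ci ((List.range k).flatMap fun i => υ.map ⇑(α ^ (i + 1))) D ∧
        Sim (α ^ k) Γj D Ci ∧ (∀ c ∈ D, ∃ l ≤ k, ∃ z ∈ T, (α ^ l) z = c.2) := by
    intro k
    induction k with
    | zero =>
      refine ⟨Ci, Steps.nil _, ?_, ?_⟩
      · intro c hc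
        by_cases h : c.2 ∈ Γj
        · exact Or.inl ⟨c.2, h, rfl, hc⟩
        · refine Or.inr ⟨?_, c.2, h, hc⟩
          rintro x hx hxc
          exact h (by rw [← hxc]; exact hx)
      · intro c hc
        exact ⟨0, le_rfl, c.2, hT0 _ (hTi c hc), rfl⟩
    | succ n ih =>
      obtain ⟨D, hD, hsim, hlet⟩ := ih
      have hsim' : Sim (α ^ (n + 1)) Γj D Cj := by
        intro c hc
        rcases hsim c hc with ⟨x, hx, hxc, hxC⟩ | ⟨h1, x, hx, hxC⟩
        · rcases hbase _ hxC with ⟨y, hy, hyx, hyC⟩ | ⟨h2, h3⟩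
          · left
            refine ⟨y, hy, ?_, hyC⟩
            rw [pow_succ, Equiv.Perm.mul_apply, hyx]; exact hxc
          · right
            refine ⟨fun y hy hyc => h2 y hy ?_, h3⟩
            rw [pow_succ, Equiv.Perm.mul_apply, ← hxc] at hyc
            exact (α ^ n).injective hyc
        · right
          refine ⟨?_, hout (c.1, x) hxC (fun h => hx (hΓij h))⟩
          intro y hy hyc
          rcases hα2 y (hTj y hy) with h | h
          · rw [pow_succ, Equiv.Perm.mul_apply] at hyc
            rcases Finset.mem_union.1 h with h | h
            · exact h1 _ (hΓij ((hM0 _).1 h).1) hyc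
            · have h4 : α y = y := α.injective (hαΔ _ h)
              rw [h4] at hyc
              exact h1 y hy hyc
          · obtain ⟨l, hl, z, hz, hzc⟩ := hlet c hc
            rw [← hzc, show n + 1 = l + (n + 1 - l) by omega, pow_add,
              Equiv.Perm.mul_apply] at hyc
            have := (α ^ l).injective hyc
            exact h (n + 1 - l) (by omega) (this ▸ hz)
      obtain ⟨D', hD', hs'⟩ := Sim.steps (IsDeltaPerm.pow hαΔ (n + 1)) hυ D hsim' (by
        intro x hx; rw [hΓj]; exact List.mem_append_left _ hx)
      refine ⟨D', ?_, hs', ?_⟩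
      · rw [List.range_succ, List.flatMap_append]
        refine hD.append ?_
        simpa using hD'
      · refine hD'.letters (fun y => ∃ l ≤ n + 1, ∃ z ∈ T, (α ^ l) z = y) ?_ ?_
        · intro c hc
          obtain ⟨l, hl, h⟩ := hlet c hc
          exact ⟨l, by omega, h⟩
        · intro x hx _
          obtain ⟨z, hz, rfl⟩ := List.mem_map.1 hx
          exact ⟨n + 1, le_rfl, z, hTj z (by rw [hΓj]; exact List.mem_append_left _ hz), rfl⟩
  intro k
  obtain ⟨D, hD, hsim, _⟩ := main k
  obtain ⟨D', hD', hs'⟩ := Sim.steps (IsDeltaPerm.pow hαΔ k) hφ D hsim (by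
    intro x hx; rw [hΓj]; exact List.mem_append_right _ hx)
  refine ⟨D', hD.append hD', ?_⟩
  intro c hc
  rcases hs' c hc with ⟨x, _, _, h⟩ | ⟨_, x, _, h⟩
  · exact hacc (c.1, x) h
  · exact hacc (c.1, x) h

end AFMA

/-- Corollary (trace form of the sufficient condition): if `w ∈ L(A)` via an
accepting run `Cs` and there are `i < j ≤ m = |w|` with
`S_{w,C,i} = S_{w,C,j}` and `f_{w,C,i}(Q) ≤ f_{w,C,j}(Q)` for every nonempty
`Q ⊆ S` (where `Σ_i` is the set of letters of the last `i` letters of `w`,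
`S_{w,C,i} = S^{Σ∖Σ_i}(C_{m−i})` and `f_{w,C,i}(Q) = card(Σ^Q(C_{m−i}) ∩ Σ_i)`),
then for `τ = σ1⋯σ_{m−j}`, `υ = σ_{m−j+1}⋯σ_{m−i}`, `φ = σ_{m−i+1}⋯σ_m`
there is a `Δ`-permutation `α` with
`τ υ α(υ) α²(υ) ⋯ α^k(υ) α^k(φ) ∈ L(A)` for every `k ≥ 1`. -/
theorem afma_pumping_of_trace {Sigma S : Type} [Infinite Sigma] [Fintype S]
    (A : AFMA Sigma S) (w : List Sigma)
    (Cs : ℕ → Set (S × Sigma))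
    (h0 : Cs 0 = {(A.s0, A.θ0)})
    (hstep : ∀ l (h : l < w.length),
      A.SetStep (Cs l) (w.get ⟨l, h⟩) (Cs (l + 1)))
    (hacc : A.Accepting (Cs w.length))
    (i j : ℕ) (hij : i < j) (hjm : j ≤ w.length)
    (hS : AFMA.statesOn (Cs (w.length - i)) {x | x ∈ w.drop (w.length - i)}ᶜ =
      AFMA.statesOn (Cs (w.length - j)) {x | x ∈ w.drop (w.length - j)}ᶜ)
    (hf : ∀ Q : Set S, Q.Nonempty →
      (AFMA.lettersWith (Cs (w.length - i)) Q ∩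
        {x | x ∈ w.drop (w.length - i)}).ncard ≤
      (AFMA.lettersWith (Cs (w.length - j)) Q ∩
        {x | x ∈ w.drop (w.length - j)}).ncard) :
    ∃ α : Equiv.Perm Sigma, IsDeltaPerm A.Δ α ∧
      ∀ k : ℕ, 1 ≤ k →
        pumpedWord α (w.take (w.length - j)) ((w.drop (w.length - j)).take (j - i))
          (w.drop (w.length - i)) k ∈ A.Lang := by
  classical
  have hrun := AFMA.steps_of_run w Cs hstep
  have hτ : A.Steps {(A.s0, A.θ0)} (w.take (w.length - j)) (Cs (w.length - j)) := by
    have := hrun (w.length - j) 0 (by omega)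
    rw [h0] at this
    simpa using this
  have hυ : A.Steps (Cs (w.length - j)) ((w.drop (w.length - j)).take (j - i))
      (Cs (w.length - i)) := by
    have := hrun (j - i) (w.length - j) (by omega)
    rwa [show w.length - j + (j - i) = w.length - i by omega] at this
  have hφ : A.Steps (Cs (w.length - i)) (w.drop (w.length - i)) (Cs w.length) := by
    have := hrun i (w.length - i) (by omega)
    rwa [show w.length - i + i = w.length by omega,
      List.take_of_length_le (by simp; omega)] at this
  have hsplit : w.drop (w.length - j) =
      (w.drop (w.length - j)).take (j - i) ++ w.drop (w.length - i) := by
    conv_lhs => rw [← List.take_append_drop (j - i) (w.drop (w.length - j))]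
    rw [List.drop_drop, show w.length - j + (j - i) = w.length - i by omega]
  have hΔj : ∀ c ∈ Cs (w.length - j), c.2 ∉ A.Δ :=
    hτ.letters (fun x => x ∉ A.Δ) (by rintro c rfl; exact A.θ0_notin) (fun _ _ h => h)
  have hΔi : ∀ c ∈ Cs (w.length - i), c.2 ∉ A.Δ :=
    hυ.letters (fun x => x ∉ A.Δ) hΔj (fun _ _ h => h)
  have hTi : ∀ c ∈ Cs (w.length - i), c.2 ∈ insert A.θ0 w.toFinset :=
    (hτ.append hυ).letters (fun x => x ∈ insert A.θ0 w.toFinset)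
      (by rintro c rfl; simp)
      (by
        intro x hx _
        have : x ∈ w := by
          rcases List.mem_append.1 hx with h | h
          · exact List.mem_of_mem_take h
          · exact List.mem_of_mem_drop (List.mem_of_mem_take h)
        simp [this])
  obtain ⟨α, hα, hk⟩ := AFMA.pump_core A _ _ _ _ _ hυ hφ hacc _ hTi hΔi hΔj
    {x | x ∈ w.drop (w.length - i)} {x | x ∈ w.drop (w.length - j)} rfl
    (by rw [← hsplit]) hS hf
  refine ⟨α, hα, fun k _ => ?_⟩
  obtain ⟨C, hC, hCa⟩ := hk k
  refine ⟨C, ?_, hCa⟩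
  have := (hτ.append hυ).append hC
  unfold pumpedWord
  rw [List.append_assoc _ _ (List.map _ _)]
  exact this
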